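/- Let H ∈ (1/2,1). For all s,t ≥ 0, ∫_0^{t∧s} K_H(t,r) K_H(s,r) dr = (1/2)(t^{2H} + s^{2H} − |t−s|^{2H}); that is, the kernel K_H factorizes the covariance function R_H(t,s) of fractional Brownian motion with Hurst index H. -/

import Mathlib

open MeasureTheory Set

/-- The Beta function, `B(a,b) = Γ(a)Γ(b)/Γ(a+b)`. -/
noncomputable def realBeta (a b : ℝ) : ℝ :=
  Real.Gamma a * Real.Gamma b / Real.Gamma (a + b)

/-- The normalizing constant `C_H = √(H(2H−1)/B(2−2H, H−1/2))`. -/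
noncomputable def CH (H : ℝ) : ℝ :=
  Real.sqrt (H * (2 * H - 1) / realBeta (2 - 2 * H) (H - 1 / 2))

/-- The kernel `K_H(t,s) = C_H s^{1/2−H} ∫_s^t (u−s)^{H−3/2} u^{H−1/2} du` for `s < t`,
and `K_H(t,s) = 0` for `s ≥ t`. -/
noncomputable def KH (H t s : ℝ) : ℝ :=
  if s < t then
    CH H * s ^ ((1:ℝ) / 2 - H) * ∫ u in s..t, (u - s) ^ (H - 3 / 2) * u ^ (H - 1 / 2)
  else 0

/-!
For `r > 0` one has `K_H(t,r) = C_H ∫₀ᵗ g(r,u) du` with `g(r,u) = r^{-a} (u-r)₊^{a-1} u^a` and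
`a = H - 1/2`. By Tonelli,
`∫ K_H(t,r) K_H(s,r) dr = C_H² ∫₀ˢ ∫₀ᵗ (∫ g(r,u) g(r,v) dr) du dv`. For `u < v`, the homography of
`(0,u)` onto `(0,1)` that sends `v` to `∞` turns the innermost integral into a Beta integral, equal
to `B(1-2a,a) |u-v|^{2a-1}`. The remaining double integral is elementary, because `|x|^{2a+1}` is,
up to a constant, a second primitive of `|x|^{2a-1}`.
-/

open scoped ENNReal

lemma setLIntegral_Ioo_ofReal {f : ℝ → ℝ} {a b : ℝ} (hab : a ≤ b)
    (hf : IntervalIntegrable f volume a b) (hf₀ : ∀ x ∈ Ioo a b, 0 ≤ f x) :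
    ∫⁻ x in Ioo a b, ENNReal.ofReal (f x) = ENNReal.ofReal (∫ x in a..b, f x) := by
  rw [intervalIntegral.integral_of_le hab, integral_Ioc_eq_integral_Ioo,
    ofReal_integral_eq_lintegral_ofReal
      ((intervalIntegrable_iff_integrableOn_Ioo_of_le hab).1 hf)
      ((ae_restrict_mem measurableSet_Ioo).mono hf₀)]

section AbsRpow

variable {c : ℝ}

lemma intervalIntegrable_abs_rpow (hc : -1 < c) (a b : ℝ) :
    IntervalIntegrable (fun x ↦ |x| ^ c) volume a b := by
  refine intervalIntegrable_of_even (fun x ↦ by rw [abs_neg]) fun x hx ↦ ?_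
  refine (intervalIntegral.intervalIntegrable_rpow' hc).congr fun y hy ↦ ?_
  rw [uIoc_of_le hx.le] at hy
  simp only [abs_of_pos hy.1]

lemma intervalIntegrable_mul_abs_rpow (hc : -1 < c) (a b : ℝ) :
    IntervalIntegrable (fun x ↦ x * |x| ^ c) volume a b :=
  (intervalIntegrable_abs_rpow hc a b).continuousOn_mul continuousOn_id

lemma integral_zero_left_abs_rpow (hc : -1 < c) (b : ℝ) :
    ∫ x in (0 : ℝ)..b, |x| ^ c = b * |b| ^ c / (c + 1) := by
  have of_nonneg {b : ℝ} (hb : 0 ≤ b) : ∫ x in (0 : ℝ)..b, |x| ^ c = b * |b| ^ c / (c + 1) := by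
    have h_abs : EqOn (fun x : ℝ ↦ |x| ^ c) (fun x ↦ x ^ c) (uIcc 0 b) := fun x hx ↦ by
      rw [uIcc_of_le hb] at hx
      simp only [abs_of_nonneg hx.1]
    rw [intervalIntegral.integral_congr h_abs, integral_rpow (.inl hc),
      Real.zero_rpow (by linarith), Real.rpow_add_one' hb (by linarith), abs_of_nonneg hb]
    ring
  rcases le_total 0 b with hb | hb
  · exact of_nonneg hb
  · have h_neg := of_nonneg (neg_nonneg.2 hb)
    calc ∫ x in (0 : ℝ)..b, |x| ^ c = ∫ x in -b..0, |x| ^ c := by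
          simpa only [abs_neg, neg_zero] using
            intervalIntegral.integral_comp_neg (a := 0) (b := b) fun x ↦ |x| ^ c
      _ = b * |b| ^ c / (c + 1) := by
          rw [intervalIntegral.integral_symm, h_neg, abs_neg]
          ring

lemma integral_abs_rpow (hc : -1 < c) (a b : ℝ) :
    ∫ x in a..b, |x| ^ c = (b * |b| ^ c - a * |a| ^ c) / (c + 1) := by
  rw [← intervalIntegral.integral_interval_sub_left (intervalIntegrable_abs_rpow hc 0 b)
    (intervalIntegrable_abs_rpow hc 0 a), integral_zero_left_abs_rpow hc,
    integral_zero_left_abs_rpow hc, sub_div]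

lemma integral_mul_abs_rpow (hc : -1 < c) (a b : ℝ) :
    ∫ x in a..b, x * |x| ^ c = (|b| ^ (c + 2) - |a| ^ (c + 2)) / (c + 2) := by
  have h_deriv (x : ℝ) : HasDerivAt (fun y ↦ |y| ^ (c + 2) / (c + 2)) (x * |x| ^ c) x := by
    refine ((hasDerivAt_abs_rpow x (by linarith : 1 < c + 2)).div_const (c + 2)).congr_deriv ?_
    have : c + 2 ≠ 0 := by linarith
    rw [add_sub_cancel_right]
    field_simp
  rw [intervalIntegral.integral_eq_sub_of_hasDerivAt (fun x _ ↦ h_deriv x)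
    (intervalIntegrable_mul_abs_rpow hc a b), sub_div]

lemma integral_abs_sub_rpow (hc : -1 < c) (t v : ℝ) :
    ∫ u in (0 : ℝ)..t, |u - v| ^ c = ((t - v) * |t - v| ^ c + v * |v| ^ c) / (c + 1) := by
  rw [intervalIntegral.integral_comp_sub_right (fun x ↦ |x| ^ c), integral_abs_rpow hc, zero_sub,
    abs_neg]
  ring

lemma intervalIntegrable_sub_mul_abs_sub_rpow (hc : -1 < c) (a b t : ℝ) :
    IntervalIntegrable (fun v ↦ (t - v) * |t - v| ^ c) volume a b := by
  simpa using (intervalIntegrable_mul_abs_rpow hc (t - a) (t - b)).comp_sub_left t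

lemma intervalIntegrable_integral_abs_sub_rpow (hc : -1 < c) (a b t : ℝ) :
    IntervalIntegrable (fun v ↦ ∫ u in (0 : ℝ)..t, |u - v| ^ c) volume a b := by
  simp_rw [integral_abs_sub_rpow hc]
  exact ((intervalIntegrable_sub_mul_abs_sub_rpow hc a b t).add
    (intervalIntegrable_mul_abs_rpow hc a b)).div_const _

lemma integral_integral_abs_sub_rpow (hc : -1 < c) (s t : ℝ) :
    ∫ v in (0 : ℝ)..s, ∫ u in (0 : ℝ)..t, |u - v| ^ c =
      (|s| ^ (c + 2) + |t| ^ (c + 2) - |t - s| ^ (c + 2)) / ((c + 1) * (c + 2)) := by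
  simp_rw [integral_abs_sub_rpow hc]
  rw [intervalIntegral.integral_div,
    intervalIntegral.integral_add (intervalIntegrable_sub_mul_abs_sub_rpow hc 0 s t)
      (intervalIntegrable_mul_abs_rpow hc 0 s),
    intervalIntegral.integral_comp_sub_left (fun x ↦ x * |x| ^ c), integral_mul_abs_rpow hc,
    integral_mul_abs_rpow hc, sub_zero, abs_zero, Real.zero_rpow (by linarith), ← add_div,
    div_div, mul_comm (c + 2)]
  ring

lemma lintegral_lintegral_abs_sub_rpow (hc : -1 < c) {s t : ℝ} (hs : 0 ≤ s) (ht : 0 ≤ t) :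
    ∫⁻ v in Ioo 0 s, ∫⁻ u in Ioo 0 t, ENNReal.ofReal (|u - v| ^ c) =
      ENNReal.ofReal
        ((s ^ (c + 2) + t ^ (c + 2) - |t - s| ^ (c + 2)) / ((c + 1) * (c + 2))) := by
  have h_inner (v : ℝ) : ∫⁻ u in Ioo 0 t, ENNReal.ofReal (|u - v| ^ c) =
      ENNReal.ofReal (∫ u in (0 : ℝ)..t, |u - v| ^ c) :=
    setLIntegral_Ioo_ofReal ht
      (by simpa using (intervalIntegrable_abs_rpow hc (-v) (t - v)).comp_sub_right v)
      fun u _ ↦ by positivity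
  simp_rw [h_inner]
  rw [setLIntegral_Ioo_ofReal hs (intervalIntegrable_integral_abs_sub_rpow hc 0 s t)
    fun v _ ↦ intervalIntegral.integral_nonneg ht fun u _ ↦ by positivity,
    integral_integral_abs_sub_rpow hc, abs_of_nonneg hs, abs_of_nonneg ht]

end AbsRpow

section EulerIntegral

variable {p q u v r : ℝ}

lemma realBeta_pos (hp : 0 < p) (hq : 0 < q) : 0 < realBeta p q :=
  ProbabilityTheory.beta_pos hp hq

lemma lintegral_rpow_mul_one_sub_rpow (hp : 0 < p) (hq : 0 < q) :
    ∫⁻ x in Ioo (0 : ℝ) 1, ENNReal.ofReal (x ^ (p - 1) * (1 - x) ^ (q - 1)) =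
      ENNReal.ofReal (realBeta p q) := by
  have hB := realBeta_pos hp hq
  calc ∫⁻ x in Ioo (0 : ℝ) 1, ENNReal.ofReal (x ^ (p - 1) * (1 - x) ^ (q - 1))
      = ∫⁻ x in Ioo (0 : ℝ) 1, ENNReal.ofReal (realBeta p q) *
          ENNReal.ofReal (1 / realBeta p q * x ^ (p - 1) * (1 - x) ^ (q - 1)) := by
        refine lintegral_congr fun x ↦ ?_
        rw [← ENNReal.ofReal_mul hB.le]
        field_simp
    _ = ENNReal.ofReal (realBeta p q) * ∫⁻ x, ProbabilityTheory.betaPDF p q x := by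
        rw [lintegral_const_mul _ (by fun_prop), ProbabilityTheory.lintegral_betaPDF]
        rfl
    _ = ENNReal.ofReal (realBeta p q) := by
        rw [ProbabilityTheory.lintegral_betaPDF_eq_one hp hq, mul_one]

/-- The homography with `0 ↦ 0`, `u ↦ 1` and `v ↦ ∞`. It is used on `(0, u)` with `u < v`; at `v`
it takes the junk value `0`. -/
noncomputable def homography (u v r : ℝ) : ℝ := r * (v - u) / (u * (v - r))

lemma one_sub_homography (hu : u ≠ 0) (hr : r ≠ v) :
    1 - homography u v r = v * (u - r) / (u * (v - r)) := by
  have : v - r ≠ 0 := sub_ne_zero.2 hr.symm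
  rw [homography]
  field_simp
  ring

lemma hasDerivAt_homography (hu : u ≠ 0) (hr : r ≠ v) :
    HasDerivAt (homography u v) (v * (v - u) / (u * (v - r) ^ 2)) r := by
  have hvr : v - r ≠ 0 := sub_ne_zero.2 hr.symm
  have h_num := (hasDerivAt_id r).mul_const (v - u)
  have h_den := ((hasDerivAt_id r).const_sub v).const_mul u
  refine (h_num.div h_den (mul_ne_zero hu hvr)).congr_deriv ?_
  simp only [id]
  field_simp
  ring

lemma bijOn_homography (hu : 0 < u) (huv : u < v) :
    BijOn (homography u v) (Ioo 0 u) (Ioo 0 1) := by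
  have hvu : 0 < v - u := sub_pos.2 huv
  have hv : 0 < v := hu.trans huv
  have h_inv : InvOn (fun x ↦ x * (u * v) / (v - u + x * u)) (homography u v)
      (Ioo 0 u) (Ioo 0 1) := by
    constructor
    · rintro r ⟨-, hr⟩
      have hvr : 0 < v - r := by linarith
      have h_den : v - u + homography u v r * u = (v - u) * v / (v - r) := by
        rw [homography]
        field_simp
        ring
      simp only [h_den]
      rw [homography]
      field_simp
    · rintro x ⟨hx, -⟩
      have : 0 < v - u + x * u := by positivity
      have h_sub : v - x * (u * v) / (v - u + x * u) = v * (v - u) / (v - u + x * u) := by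
        field_simp
        ring
      simp only [homography, h_sub]
      field_simp
  refine h_inv.bijOn ?_ ?_
  · rintro r ⟨hr, hru⟩
    have hvr : 0 < v - r := by linarith
    refine ⟨by unfold homography; positivity, sub_pos.1 ?_⟩
    rw [one_sub_homography hu.ne' (hru.trans huv).ne]
    have : 0 < u - r := sub_pos.2 hru
    positivity
  · rintro x ⟨hx, hx1⟩
    have h_den : 0 < v - u + x * u := by positivity
    refine ⟨by positivity, (div_lt_iff₀ h_den).2 ?_⟩
    nlinarith [mul_pos (mul_pos hu hvu) (sub_pos.2 hx1)]

lemma rpow_mul_sub_rpow_mul_sub_rpow_eq_homography (hr : 0 < r) (hru : r < u) (huv : u < v) :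
    r ^ (p - 1) * (u - r) ^ (q - 1) * (v - r) ^ (-(p + q)) =
      u ^ (p + q - 1) * v ^ (-q) * (v - u) ^ (-p) * (v * (v - u) / (u * (v - r) ^ 2) *
        (homography u v r ^ (p - 1) * (1 - homography u v r) ^ (q - 1))) := by
  have hu : 0 < u := hr.trans hru
  have hv : 0 < v := hu.trans huv
  have hvr : 0 < v - r := sub_pos.2 (hru.trans huv)
  have hur : 0 < u - r := sub_pos.2 hru
  have hvu : 0 < v - u := sub_pos.2 huv
  rw [one_sub_homography hu.ne' (hru.trans huv).ne, homography,
    Real.div_rpow (by positivity) (by positivity), Real.div_rpow (by positivity) (by positivity),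
    Real.mul_rpow hr.le hvu.le, Real.mul_rpow hv.le hur.le, Real.mul_rpow hu.le hvr.le,
    Real.mul_rpow hu.le hvr.le]
  simp only [Real.rpow_sub_one hr.ne', Real.rpow_sub_one hu.ne', Real.rpow_sub_one hv.ne',
    Real.rpow_sub_one hur.ne', Real.rpow_sub_one hvr.ne', Real.rpow_sub_one hvu.ne',
    Real.rpow_neg hvr.le, Real.rpow_neg hv.le, Real.rpow_neg hvu.le, Real.rpow_add hvr,
    Real.rpow_add hu]
  field_simp

/-- Euler's integral for the hypergeometric function `₂F₁(p + q, p; p + q; u / v)`, which is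
elementary. -/
lemma lintegral_rpow_mul_sub_rpow_mul_sub_rpow (hp : 0 < p) (hq : 0 < q) (hu : 0 < u)
    (huv : u < v) :
    ∫⁻ r in Ioo 0 u, ENNReal.ofReal (r ^ (p - 1) * (u - r) ^ (q - 1) * (v - r) ^ (-(p + q))) =
      ENNReal.ofReal (u ^ (p + q - 1) * v ^ (-q) * (v - u) ^ (-p) * realBeta p q) := by
  have hv : 0 < v := hu.trans huv
  have : 0 < v - u := sub_pos.2 huv
  have h_subst : ∀ r ∈ Ioo 0 u,
      ENNReal.ofReal (r ^ (p - 1) * (u - r) ^ (q - 1) * (v - r) ^ (-(p + q))) =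
        ENNReal.ofReal (u ^ (p + q - 1) * v ^ (-q) * (v - u) ^ (-p)) *
          (ENNReal.ofReal |v * (v - u) / (u * (v - r) ^ 2)| * ENNReal.ofReal
            (homography u v r ^ (p - 1) * (1 - homography u v r) ^ (q - 1))) := by
    rintro r ⟨hr, hru⟩
    rw [abs_of_nonneg (by positivity), ← ENNReal.ofReal_mul (by positivity),
      ← ENNReal.ofReal_mul (by positivity),
      rpow_mul_sub_rpow_mul_sub_rpow_eq_homography hr hru huv]
  have h_bij := bijOn_homography hu huv
  rw [setLIntegral_congr_fun measurableSet_Ioo h_subst,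
    lintegral_const_mul' _ _ ENNReal.ofReal_ne_top,
    ← lintegral_image_eq_lintegral_abs_deriv_mul measurableSet_Ioo
      (fun r hr ↦ (hasDerivAt_homography hu.ne' (hr.2.trans huv).ne).hasDerivWithinAt) h_bij.injOn
      (fun x ↦ ENNReal.ofReal (x ^ (p - 1) * (1 - x) ^ (q - 1))),
    h_bij.image_eq, lintegral_rpow_mul_one_sub_rpow hp hq, ← ENNReal.ofReal_mul (by positivity)]

end EulerIntegral

lemma abs_sub_rpow_le_add_rpow {s t p : ℝ} (hs : 0 ≤ s) (ht : 0 ≤ t) (hp : 0 ≤ p) :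
    |t - s| ^ p ≤ s ^ p + t ^ p := by
  wlog h : s ≤ t generalizing s t
  · rw [abs_sub_comm, add_comm]
    exact this ht hs (le_of_not_ge h)
  calc |t - s| ^ p ≤ t ^ p :=
        Real.rpow_le_rpow (abs_nonneg _) (by rw [abs_of_nonneg (sub_nonneg.2 h)]; linarith) hp
    _ ≤ s ^ p + t ^ p := le_add_of_nonneg_left (Real.rpow_nonneg hs p)

section VolterraDensity

/-- The density `g(r,u) = r^{-a} (u-r)₊^{a-1} u^a` of the Volterra kernel with respect to `u`:
`K_H(t,r) = C_H ∫₀ᵗ g(r,u) du` for `a = H - 1/2`. It takes values in `[0, ∞]`, so that Tonelli's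
theorem applies to it without integrability conditions. -/
noncomputable def volterraDensity (a r u : ℝ) : ℝ≥0∞ :=
  if r < u then ENNReal.ofReal (r ^ (-a) * (u - r) ^ (a - 1) * u ^ a) else 0

lemma measurable_volterraDensity (a : ℝ) : Measurable (Function.uncurry (volterraDensity a)) :=
  Measurable.ite (measurableSet_lt measurable_fst measurable_snd) (by fun_prop) measurable_const

lemma lintegral_volterraDensity_mul_of_lt {a u v : ℝ} (ha : 0 < a) (ha' : a < 1 / 2) (hu : 0 < u)
    (huv : u < v) :
    ∫⁻ r in Ioi 0, volterraDensity a r u * volterraDensity a r v =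
      ENNReal.ofReal (realBeta (1 - 2 * a) a * (v - u) ^ (2 * a - 1)) := by
  have hv : 0 < v := hu.trans huv
  have h_euler : ∀ r ∈ Ioi (0 : ℝ), volterraDensity a r u * volterraDensity a r v =
      (Iio u).indicator (fun r ↦ ENNReal.ofReal ((u * v) ^ a) * ENNReal.ofReal
        (r ^ (1 - 2 * a - 1) * (u - r) ^ (a - 1) * (v - r) ^ (-(1 - 2 * a + a)))) r := by
    intro r hr
    rcases lt_or_ge r u with hru | hur
    · have hr' : 0 < r := hr
      have : 0 < u - r := sub_pos.2 hru
      rw [volterraDensity, volterraDensity, if_pos hru, if_pos (hru.trans huv),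
        indicator_of_mem (mem_Iio.2 hru), ← ENNReal.ofReal_mul (by positivity),
        ← ENNReal.ofReal_mul (by positivity), Real.mul_rpow hu.le hv.le,
        show 1 - 2 * a - 1 = -a + -a by ring, show -(1 - 2 * a + a) = a - 1 by ring,
        Real.rpow_add hr']
      ring_nf
    · rw [volterraDensity, if_neg hur.not_gt, zero_mul, indicator_of_notMem (notMem_Iio.2 hur)]
  have h_cancel : (u * v) ^ a * (u ^ (1 - 2 * a + a - 1) * v ^ (-a)) = 1 := by
    rw [show 1 - 2 * a + a - 1 = -a by ring, ← Real.mul_rpow hu.le hv.le,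
      ← Real.rpow_add (by positivity), add_neg_cancel, Real.rpow_zero]
  rw [setLIntegral_congr_fun measurableSet_Ioi h_euler, setLIntegral_indicator measurableSet_Iio,
    Iio_inter_Ioi, lintegral_const_mul' _ _ ENNReal.ofReal_ne_top,
    lintegral_rpow_mul_sub_rpow_mul_sub_rpow (by linarith) ha hu huv,
    ← ENNReal.ofReal_mul (by positivity), ← mul_assoc, ← mul_assoc, h_cancel, one_mul, mul_comm,
    neg_sub]

lemma lintegral_volterraDensity_mul {a u v : ℝ} (ha : 0 < a) (ha' : a < 1 / 2) (hu : 0 < u)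
    (hv : 0 < v) (huv : u ≠ v) :
    ∫⁻ r in Ioi 0, volterraDensity a r u * volterraDensity a r v =
      ENNReal.ofReal (realBeta (1 - 2 * a) a) * ENNReal.ofReal (|u - v| ^ (2 * a - 1)) := by
  wlog h : u < v generalizing u v
  · rw [abs_sub_comm]
    simpa only [mul_comm] using this hv hu huv.symm (huv.symm.lt_of_le (not_lt.1 h))
  rw [lintegral_volterraDensity_mul_of_lt ha ha' hu h, abs_sub_comm, abs_of_pos (sub_pos.2 h),
    ENNReal.ofReal_mul (realBeta_pos (by linarith) ha).le]

lemma lintegral_mul_lintegral_eq_lintegral_lintegral_lintegral_mul {α β γ : Type*}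
    [MeasurableSpace α] [MeasurableSpace β] [MeasurableSpace γ] {μ : Measure α} {ν : Measure β}
    {κ : Measure γ} [SFinite μ] [SFinite ν] [SFinite κ] {f : α → β → ℝ≥0∞} {g : α → γ → ℝ≥0∞}
    (hf : Measurable (Function.uncurry f)) (hg : Measurable (Function.uncurry g)) :
    ∫⁻ x, (∫⁻ y, f x y ∂ν) * ∫⁻ z, g x z ∂κ ∂μ = ∫⁻ z, ∫⁻ y, ∫⁻ x, f x y * g x z ∂μ ∂ν ∂κ := by
  have h_joint : Measurable fun w : (α × γ) × β ↦ f w.1.1 w.2 * g w.1.1 w.1.2 :=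
    (hf.comp (measurable_fst.fst.prodMk measurable_snd)).mul (hg.comp measurable_fst)
  calc ∫⁻ x, (∫⁻ y, f x y ∂ν) * ∫⁻ z, g x z ∂κ ∂μ
      = ∫⁻ x, ∫⁻ z, ∫⁻ y, f x y * g x z ∂ν ∂κ ∂μ := by
        refine lintegral_congr fun x ↦ ?_
        have hgx : Measurable (g x) := hg.of_uncurry_left
        rw [← lintegral_const_mul _ hgx]
        refine lintegral_congr fun z ↦ (lintegral_mul_const _ hf.of_uncurry_left).symm
    _ = ∫⁻ z, ∫⁻ x, ∫⁻ y, f x y * g x z ∂ν ∂μ ∂κ :=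
        lintegral_lintegral_swap h_joint.lintegral_prod_right'.aemeasurable
    _ = ∫⁻ z, ∫⁻ y, ∫⁻ x, f x y * g x z ∂μ ∂ν ∂κ := by
        refine lintegral_congr fun z ↦ lintegral_lintegral_swap (Measurable.aemeasurable ?_)
        exact hf.mul (hg.of_uncurry_right.comp measurable_fst)

lemma lintegral_mul_lintegral_volterraDensity {a s t : ℝ} (ha : 0 < a) (ha' : a < 1 / 2)
    (hs : 0 ≤ s) (ht : 0 ≤ t) :
    ∫⁻ r in Ioi 0, (∫⁻ u in Ioo 0 t, volterraDensity a r u) *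
        ∫⁻ v in Ioo 0 s, volterraDensity a r v =
      ENNReal.ofReal (realBeta (1 - 2 * a) a *
        ((s ^ (2 * a + 1) + t ^ (2 * a + 1) - |t - s| ^ (2 * a + 1)) /
          (2 * a * (2 * a + 1)))) := by
  have h_inner : ∀ v ∈ Ioo 0 s,
      ∫⁻ u in Ioo 0 t, ∫⁻ r in Ioi 0, volterraDensity a r u * volterraDensity a r v =
        ENNReal.ofReal (realBeta (1 - 2 * a) a) *
          ∫⁻ u in Ioo 0 t, ENNReal.ofReal (|u - v| ^ (2 * a - 1)) := by
    intro v hv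
    rw [← lintegral_const_mul' _ _ ENNReal.ofReal_ne_top]
    refine lintegral_congr_ae ?_
    filter_upwards [ae_restrict_of_ae (Measure.ae_ne volume v), ae_restrict_mem measurableSet_Ioo]
      with u huv hu
    exact lintegral_volterraDensity_mul ha ha' hu.1 hv.1 huv
  rw [lintegral_mul_lintegral_eq_lintegral_lintegral_lintegral_mul (measurable_volterraDensity a)
    (measurable_volterraDensity a), setLIntegral_congr_fun measurableSet_Ioo h_inner,
    lintegral_const_mul' _ _ ENNReal.ofReal_ne_top,
    lintegral_lintegral_abs_sub_rpow (by linarith) hs ht,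
    ENNReal.ofReal_mul (realBeta_pos (by linarith) ha).le]
  ring_nf

end VolterraDensity

section Kernel

variable {H : ℝ}

lemma CH_sq_mul_realBeta (hH : 1 / 2 < H) (hH1 : H < 1) :
    CH H ^ 2 * realBeta (2 - 2 * H) (H - 1 / 2) = H * (2 * H - 1) := by
  have hB : 0 < realBeta (2 - 2 * H) (H - 1 / 2) := realBeta_pos (by linarith) (by linarith)
  have hnum : 0 ≤ H * (2 * H - 1) := mul_nonneg (by linarith) (by linarith)
  rw [CH, Real.sq_sqrt (by positivity), div_mul_cancel₀ _ hB.ne']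

lemma KH_of_le {t r : ℝ} (h : t ≤ r) : KH H t r = 0 :=
  if_neg h.not_gt

lemma KH_eq_CH_mul_toReal_lintegral_volterraDensity {r : ℝ} (t : ℝ) (hr : 0 ≤ r) :
    KH H t r = CH H * (∫⁻ u in Ioo 0 t, volterraDensity (H - 1 / 2) r u).toReal := by
  have h_support : ∫⁻ u in Ioo 0 t, volterraDensity (H - 1 / 2) r u = ∫⁻ u in Ioo r t,
      ENNReal.ofReal (r ^ (1 / 2 - H) * ((u - r) ^ (H - 3 / 2) * u ^ (H - 1 / 2))) := by
    have h_Ioo : Ioi r ∩ Ioo 0 t = Ioo r t := by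
      rw [← Ioi_inter_Iio, ← inter_assoc, Ioi_inter_Ioi, max_eq_left hr, Ioi_inter_Iio]
    rw [← h_Ioo, ← setLIntegral_indicator measurableSet_Ioi]
    refine lintegral_congr fun u ↦ ?_
    simp only [volterraDensity, indicator, mem_Ioi]
    ring_nf
  rcases lt_or_ge r t with hrt | htr
  · have h_nonneg : ∀ᵐ u ∂volume.restrict (Ioo r t),
        0 ≤ r ^ (1 / 2 - H) * ((u - r) ^ (H - 3 / 2) * u ^ (H - 1 / 2)) := by
      filter_upwards [ae_restrict_mem measurableSet_Ioo] with u ⟨hru, _⟩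
      have : 0 < u - r := sub_pos.2 hru
      have : 0 ≤ u := hr.trans hru.le
      positivity
    rw [KH, if_pos hrt, h_support, ← integral_eq_lintegral_of_nonneg_ae h_nonneg
      (by fun_prop), integral_const_mul, mul_assoc, intervalIntegral.integral_of_le hrt.le,
      integral_Ioc_eq_integral_Ioo]
  · rw [KH_of_le htr, h_support, Ioo_eq_empty htr.not_gt, Measure.restrict_empty,
      lintegral_zero_measure, ENNReal.toReal_zero, mul_zero]

lemma intervalIntegral_KH_mul_KH_eq_setIntegral_Ioi {s t : ℝ} (hs : 0 ≤ s) (ht : 0 ≤ t) :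
    ∫ r in (0 : ℝ)..min t s, KH H t r * KH H s r = ∫ r in Ioi 0, KH H t r * KH H s r := by
  rw [intervalIntegral.integral_of_le (le_min ht hs)]
  refine (setIntegral_eq_of_subset_of_forall_sdiff_eq_zero measurableSet_Ioi
    Ioc_subset_Ioi_self ?_).symm
  rintro r ⟨hr, hr'⟩
  rcases min_lt_iff.1 (not_le.1 fun h ↦ hr' ⟨hr, h⟩) with htr | hsr
  · rw [KH_of_le htr.le, zero_mul]
  · rw [KH_of_le hsr.le, mul_zero]

lemma setIntegral_KH_mul_KH_eq_toReal_lintegral {s t : ℝ}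
    (hfin : ∫⁻ r in Ioi 0, (∫⁻ u in Ioo 0 t, volterraDensity (H - 1 / 2) r u) *
      ∫⁻ v in Ioo 0 s, volterraDensity (H - 1 / 2) r v ≠ ∞) :
    ∫ r in Ioi 0, KH H t r * KH H s r =
      CH H ^ 2 * (∫⁻ r in Ioi 0, (∫⁻ u in Ioo 0 t, volterraDensity (H - 1 / 2) r u) *
        ∫⁻ v in Ioo 0 s, volterraDensity (H - 1 / 2) r v).toReal := by
  have h_meas (t : ℝ) : Measurable fun r ↦ ∫⁻ u in Ioo 0 t, volterraDensity (H - 1 / 2) r u :=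
    (measurable_volterraDensity _).lintegral_prod_right'
  have h_prod : AEMeasurable (fun r ↦ (∫⁻ u in Ioo 0 t, volterraDensity (H - 1 / 2) r u) *
      ∫⁻ v in Ioo 0 s, volterraDensity (H - 1 / 2) r v) (volume.restrict (Ioi 0)) :=
    ((h_meas t).mul (h_meas s)).aemeasurable
  rw [← integral_toReal h_prod (ae_lt_top' h_prod hfin), ← integral_const_mul]
  refine setIntegral_congr_fun measurableSet_Ioi fun r hr ↦ ?_
  simp only [KH_eq_CH_mul_toReal_lintegral_volterraDensity _ (le_of_lt hr), ENNReal.toReal_mul]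
  ring

lemma setIntegral_KH_mul_KH {s t : ℝ} (hH : 1 / 2 < H) (hH1 : H < 1) (hs : 0 ≤ s) (ht : 0 ≤ t) :
    ∫ r in Ioi 0, KH H t r * KH H s r =
      CH H ^ 2 * (realBeta (2 - 2 * H) (H - 1 / 2) *
        ((s ^ (2 * H) + t ^ (2 * H) - |t - s| ^ (2 * H)) / ((2 * H - 1) * (2 * H)))) := by
  have h_lintegral := lintegral_mul_lintegral_volterraDensity
    (sub_pos.2 hH) (by linarith : H - 1 / 2 < 1 / 2) hs ht
  rw [show 1 - 2 * (H - 1 / 2) = 2 - 2 * H by ring, show 2 * (H - 1 / 2) + 1 = 2 * H by ring,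
    show 2 * (H - 1 / 2) = 2 * H - 1 by ring] at h_lintegral
  have hB : 0 ≤ realBeta (2 - 2 * H) (H - 1 / 2) := (realBeta_pos (by linarith) (by linarith)).le
  have h_cov : 0 ≤ s ^ (2 * H) + t ^ (2 * H) - |t - s| ^ (2 * H) :=
    sub_nonneg.2 (abs_sub_rpow_le_add_rpow hs ht (by linarith))
  have h_den : 0 ≤ (2 * H - 1) * (2 * H) := mul_nonneg (by linarith) (by linarith)
  rw [setIntegral_KH_mul_KH_eq_toReal_lintegral (h_lintegral ▸ ENNReal.ofReal_ne_top), h_lintegral,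
    ENNReal.toReal_ofReal (mul_nonneg hB (div_nonneg h_cov h_den))]

end Kernel

/-- The kernel `K_H` factorizes the covariance function of fractional Brownian motion:
`∫_0^{t∧s} K_H(t,r) K_H(s,r) dr = (1/2)(t^{2H} + s^{2H} − |t−s|^{2H})`. -/
theorem KH_factorizes_covariance
    (H : ℝ) (hH : 1 / 2 < H) (hH1 : H < 1) (s t : ℝ) (hs : 0 ≤ s) (ht : 0 ≤ t) :
    ∫ r in (0:ℝ)..(min t s), KH H t r * KH H s r
      = (1 / 2) * (t ^ (2 * H) + s ^ (2 * H) - |t - s| ^ (2 * H)) := by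
  have h_exp : (2 * H - 1) * (2 * H) ≠ 0 := mul_ne_zero (by linarith) (by linarith)
  calc ∫ r in (0 : ℝ)..min t s, KH H t r * KH H s r
      = ∫ r in Ioi 0, KH H t r * KH H s r := intervalIntegral_KH_mul_KH_eq_setIntegral_Ioi hs ht
    _ = CH H ^ 2 * realBeta (2 - 2 * H) (H - 1 / 2) *
          ((s ^ (2 * H) + t ^ (2 * H) - |t - s| ^ (2 * H)) / ((2 * H - 1) * (2 * H))) := by
        rw [setIntegral_KH_mul_KH hH hH1 hs ht, mul_assoc]
    _ = (1 / 2) * (t ^ (2 * H) + s ^ (2 * H) - |t - s| ^ (2 * H)) := by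
        rw [CH_sq_mul_realBeta hH hH1, ← mul_div_assoc, div_eq_iff h_exp]
        ring
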